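/- arXiv:2103.05202 — 7 statements merged into one kernel-verified Lean document; each statement's English description precedes it below -/
import Mathlib

section
/- For every integer s ≥ 1, if I₁, I₂, …, I_s are (not necessarily distinct) independent sets, each of size s, in the cycle C_{2s+1}, then there exist vertices x₁, …, x_s with x_j ∈ I_j for each 1 ≤ j ≤ s, all distinct, such that {x₁, …, x_s} is an independent set of size s in C_{2s+1}. (Equivalently, f_{C_{2s+1}}(s,s) ≤ s, which together with the trivial lower bound gives f_{C_{2s+1}}(s,s) = s.) -/
/-!
Multiplication by `2` carries the arcs of `s` consecutive residues modulo `2s+1` onto the maximum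
independent sets of the cycle: if `I` is independent, then `I`, `I + 1` and the set of all `x + 2`
with `x ∈ I`, `x + 2 ∉ I` are disjoint, so a set `I` of size `s` has at most one such `x`. It
therefore suffices to find, for `s` given arcs of length `s`, a further arc of length `s` whose
points can be matched with the given arcs, each point lying in its arc.

Only the starting points of the given arcs matter. By a cycle lemma, at least `s+1` residues `p` are
such that every nonempty arc starting at `p` has fewer starting points than elements, and likewise
for arcs running backwards. As `2(s+1) > 2s+1`, the circle can be cut between some `p - 1` and `p`
such that both sides of the cut are sparse in this sense. Then sort the arcs by their starting
points from `p` on and give the arc of rank `r` the point `p + s + r`. If that arc starts at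
`p + u`, sparseness on the two sides of the cut gives `u - s ≤ r < u`, so the point lies in the arc.
-/

open Finset

namespace CyclicArc

theorem exists_perm_lt_card_le {n : ℕ} {α : Type*} [LinearOrder α] (u : Fin n → α) :
    ∃ σ : Equiv.Perm (Fin n), ∀ j,
      (σ j : ℕ) < #{i | u i ≤ u j} ∧ n ≤ σ j + #{i | u j ≤ u i} := by
  have hmono : Monotone (u ∘ Tuple.sort u) := Tuple.monotone_sort u
  refine ⟨(Tuple.sort u).symm, fun j => ?_⟩
  obtain ⟨r, rfl⟩ := (Tuple.sort u).surjective j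
  have hle : (Iic r).map (Tuple.sort u).toEmbedding ⊆
      univ.filter fun i => u i ≤ u (Tuple.sort u r) := by
    intro i hi
    obtain ⟨t, ht, rfl⟩ := mem_map.mp hi
    exact (mem_filter_univ _).mpr (hmono (mem_Iic.mp ht))
  have hge : (Ici r).map (Tuple.sort u).toEmbedding ⊆
      univ.filter fun i => u (Tuple.sort u r) ≤ u i := by
    intro i hi
    obtain ⟨t, ht, rfl⟩ := mem_map.mp hi
    exact (mem_filter_univ _).mpr (hmono (mem_Ici.mp ht))
  have hcard_le := card_le_card hle
  have hcard_ge := card_le_card hge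
  rw [card_map, Fin.card_Iic] at hcard_le
  rw [card_map, Fin.card_Ici] at hcard_ge
  rw [Equiv.symm_apply_apply]
  omega

section Arc

theorem injOn_add_natCast {M : ℕ} (p : ZMod M) : Set.InjOn (fun k : ℕ => p + k) (Set.Iio M) :=
  fun _ hk _ hl h => CharP.natCast_injOn_Iio (ZMod M) M hk hl (add_left_cancel h)

variable {M : ℕ} [NeZero M] {p x y e : ZMod M} {J : Finset (ZMod M)} {n : ℕ}

/-- The arc `p, p + 1, …, p + (n - 1)` of `ℤ/M`; it is all of `ℤ/M` as soon as `M ≤ n`. -/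
def arc (p : ZMod M) (n : ℕ) : Finset (ZMod M) := {x | (x - p).val < n}

theorem mem_arc : x ∈ arc p n ↔ (x - p).val < n := mem_filter_univ x

theorem mem_arc_iff_exists : x ∈ arc p n ↔ ∃ k < n, x = p + (k : ℕ) := by
  rw [mem_arc]
  constructor
  · exact fun hx => ⟨(x - p).val, hx, by simp⟩
  · rintro ⟨k, hk, rfl⟩
    rw [add_sub_cancel_left, ZMod.val_natCast]
    exact (Nat.mod_le k M).trans_lt hk

theorem add_natCast_mem_arc {k : ℕ} (hk : k < n) : p + k ∈ arc p n :=
  mem_arc_iff_exists.mpr ⟨k, hk, rfl⟩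

theorem card_arc (hn : n ≤ M) : #(arc p n) = n := by
  have himage : arc p n = (range n).image fun k : ℕ => p + k := by
    ext x
    simp only [mem_arc_iff_exists, mem_image, mem_range, eq_comm]
  have hsub : (range n : Set ℕ) ⊆ Set.Iio M := fun k hk => (mem_range.mp hk).trans_le hn
  rw [himage, card_image_of_injOn ((injOn_add_natCast p).mono hsub), card_range]

theorem arc_add_subset (p : ZMod M) (m n : ℕ) : arc p (m + n) ⊆ arc p m ∪ arc (p + m) n := by
  intro x hx
  obtain ⟨k, hk, rfl⟩ := mem_arc_iff_exists.mp hx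
  rcases lt_or_ge k m with hkm | hmk
  · exact mem_union_left _ (add_natCast_mem_arc hkm)
  · refine mem_union_right _ (mem_arc_iff_exists.mpr ⟨k - m, by omega, ?_⟩)
    rw [Nat.cast_sub hmk]
    ring

/-- The right-hand side says that `x` lies in the arc of length `n` running backwards from
`p - 1`. -/
theorem neg_mem_arc_one_sub : -x ∈ arc (1 - p) n ↔ M ≤ (x - p).val + n := by
  have hlt : (x - p).val < M := ZMod.val_lt _
  have hval : -x - (1 - p) = ((M - 1 - (x - p).val : ℕ) : ZMod M) := by
    rw [Nat.cast_sub (by omega), Nat.cast_sub (by omega), ZMod.natCast_self, ZMod.natCast_zmod_val]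
    ring
  rw [mem_arc, hval, ZMod.val_natCast_of_lt (by omega)]
  omega

theorem arc_subset_of_add_one_mem (hJ : ∀ z ∈ J, z ≠ e → z + 1 ∈ J) (hy : y ∈ J) :
    arc y ((e - y).val + 1) ⊆ J := by
  intro x hx
  obtain ⟨k, hk, rfl⟩ := mem_arc_iff_exists.mp hx
  clear hx
  induction k with
  | zero => simpa using hy
  | succ k ih =>
    have hne : y + k ≠ e := by
      rintro rfl
      rw [add_sub_cancel_left, ZMod.val_natCast] at hk
      have := Nat.mod_le k M
      omega
    simpa [add_assoc] using hJ _ (ih (by omega)) hne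

theorem exists_eq_arc_of_card_le_one (hJ : #{y ∈ J | y + 1 ∉ J} ≤ 1) : ∃ p, J = arc p #J := by
  rcases J.eq_empty_or_nonempty with rfl | hne
  · exact ⟨0, by simp [arc]⟩
  obtain ⟨e, he⟩ := card_le_one_iff_subset_singleton.mp hJ
  have hstep : ∀ z ∈ J, z ≠ e → z + 1 ∈ J := by
    intro z hz hze
    by_contra hz1
    exact hze (mem_singleton.mp (he (mem_filter.mpr ⟨hz, hz1⟩)))
  obtain ⟨p, hp, hmax⟩ := exists_max_image J (fun y => (e - y).val) hne
  have heq : J = arc p ((e - p).val + 1) := by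
    refine Subset.antisymm (fun x hx => ?_) (arc_subset_of_add_one_mem hstep hp)
    have hval : (x - p).val = (e - p).val - (e - x).val := by
      rw [← ZMod.val_sub (hmax x hx), sub_sub_sub_cancel_left]
    rw [mem_arc]
    omega
  have hcard : #J = (e - p).val + 1 := by
    rw [heq, card_arc (ZMod.val_lt _)]
  exact ⟨p, hcard ▸ heq⟩

end Arc

section Sparse

variable {M : ℕ} [NeZero M] {ι : Type*} {b : ι → ZMod M} {S : Finset ι} {p q : ZMod M}

/-- The condition of the cycle lemma at the starting point `p`: for `n ≠ 0`, the arc of length `n`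
from `p` has fewer than `n` points of the family `b i`, `i ∈ S`, counted with multiplicity. The
bound remains `n` for `n > M`, where the arc is all of `ℤ/M`. -/
def IsSparseFrom (b : ι → ZMod M) (S : Finset ι) (p : ZMod M) : Prop :=
  ∀ n ≠ 0, #{i ∈ S | b i ∈ arc p n} < n

theorem IsSparseFrom.insert [DecidableEq ι] {i₀ : ι} (hq : IsSparseFrom b S q)
    (hp : IsSparseFrom b S p) (hne : q ≠ p) (hle : (b i₀ - p).val ≤ (b i₀ - q).val) :
    IsSparseFrom b (insert i₀ S) q := by
  intro n hn
  rw [filter_insert]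
  split_ifs with hi₀
  swap
  · exact hq n hn
  have hd : (p - q).val = (b i₀ - q).val - (b i₀ - p).val := by
    rw [← ZMod.val_sub hle, sub_sub_sub_cancel_left]
  have hd_ne : (p - q).val ≠ 0 := by
    rw [Ne, ZMod.val_eq_zero, sub_eq_zero]
    exact hne.symm
  rw [mem_arc] at hi₀
  set d := (p - q).val with hd_def
  have hqd : q + (d : ZMod M) = p := by simp [hd_def]
  have hcover : arc q n ⊆ arc q d ∪ arc p (n - d) := by
    simpa only [hqd, Nat.add_sub_of_le (show d ≤ n by omega)] using arc_add_subset q d (n - d)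
  have hcount : #{i ∈ S | b i ∈ arc q n} ≤
      #{i ∈ S | b i ∈ arc q d} + #{i ∈ S | b i ∈ arc p (n - d)} := by
    refine (card_le_card fun i hi => ?_).trans (card_union_le _ _)
    rw [← filter_or]
    rw [mem_filter] at hi ⊢
    exact ⟨hi.1, mem_union.mp (hcover hi.2)⟩
  have hq_lt := hq d hd_ne
  have hp_lt := hp (n - d) (by omega)
  have hinsert := card_insert_le i₀ {i ∈ S | b i ∈ arc q n}
  omega

open Classical in
/-- Each new point spoils at most one residue: the first one that was still sparse
when walking backwards from that point. -/
theorem le_card_isSparseFrom_add_card (b : ι → ZMod M) (S : Finset ι) :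
    M ≤ #{p | IsSparseFrom b S p} + #S := by
  induction S using Finset.induction_on with
  | empty => simp [IsSparseFrom, ZMod.card, Nat.pos_iff_ne_zero]
  | insert i₀ S hi₀ ih =>
    rw [card_insert_of_notMem hi₀]
    rcases ({p | IsSparseFrom b S p} : Finset (ZMod M)).eq_empty_or_nonempty with h | h
    · rw [h, card_empty] at ih
      omega
    obtain ⟨p, hp, hmin⟩ := exists_min_image _ (fun p => (b i₀ - p).val) h
    have hsub : ({q | IsSparseFrom b S q} : Finset (ZMod M)) ⊆
        insert p ({q | IsSparseFrom b (insert i₀ S) q} : Finset (ZMod M)) := by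
      intro q hq
      rw [mem_insert, or_iff_not_imp_left]
      intro hne
      rw [mem_filter_univ] at hp ⊢
      exact ((mem_filter_univ q).mp hq).insert hp hne (hmin q hq)
    have hcard := (card_le_card hsub).trans (card_insert_le _ _)
    omega

theorem exists_isSparseFrom_and_neg (hS : 2 * #S < M) :
    ∃ p, IsSparseFrom b S p ∧ IsSparseFrom (-b) S (1 - p) := by
  classical
  have hforward := le_card_isSparseFrom_add_card b S
  have hbackward := le_card_isSparseFrom_add_card (-b) S
  have hreflect := card_image_of_injective ({q | IsSparseFrom (-b) S q} : Finset (ZMod M))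
    (sub_right_injective (b := (1 : ZMod M)))
  obtain ⟨p, hp⟩ := inter_nonempty_of_card_lt_card_add_card
    (subset_univ ({p | IsSparseFrom b S p} : Finset (ZMod M)))
    (subset_univ (({q | IsSparseFrom (-b) S q} : Finset (ZMod M)).image (1 - ·)))
    (by rw [card_univ, ZMod.card]; omega)
  obtain ⟨hp, hp'⟩ := mem_inter.mp hp
  obtain ⟨q, hq, rfl⟩ := mem_image.mp hp'
  rw [mem_filter_univ] at hp hq
  exact ⟨1 - q, hp, by rwa [sub_sub_cancel]⟩

theorem exists_perm_add_mem_arc {n l : ℕ} (b : Fin n → ZMod M) (hn : 2 * n < M)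
    (hl : M ≤ n + l + 1) :
    ∃ (c : ZMod M) (σ : Equiv.Perm (Fin n)), ∀ j, c + (σ j : ℕ) ∈ arc (b j) l := by
  obtain ⟨p, hforward, hbackward⟩ :=
    exists_isSparseFrom_and_neg (b := b) (S := univ) (by simpa using hn)
  obtain ⟨σ, hσ⟩ := exists_perm_lt_card_le fun j => (b j - p).val
  refine ⟨p + l, σ, fun j => ?_⟩
  obtain ⟨hlt, hge⟩ := hσ j
  have hval : (b j - p).val < M := ZMod.val_lt _
  have hfirst : #{i | (b i - p).val ≤ (b j - p).val} ≤ (b j - p).val := by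
    simpa only [mem_arc, Nat.lt_succ_iff] using hforward _ (Nat.succ_ne_zero (b j - p).val)
  have hlast : #{i | (b j - p).val ≤ (b i - p).val} < M - (b j - p).val := by
    have hcut : ∀ i, M ≤ (b i - p).val + (M - (b j - p).val) ↔
        (b j - p).val ≤ (b i - p).val := by omega
    simpa only [Pi.neg_apply, neg_mem_arc_one_sub, hcut] using
      hbackward (M - (b j - p).val) (by omega)
  refine mem_arc_iff_exists.mpr ⟨l + σ j - (b j - p).val, by omega, ?_⟩
  rw [Nat.cast_sub (by omega), Nat.cast_add, ZMod.natCast_zmod_val]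
  ring

end Sparse

section OddCycle

theorem card_filter_notMem_add_two_mul_card_le {α : Type*} [Fintype α] [DecidableEq α]
    {f : α → α} (hf : Function.Injective f) {I : Finset α} (hI : ∀ x ∈ I, f x ∉ I) :
    #{x ∈ I | f (f x) ∉ I} + 2 * #I ≤ Fintype.card α := by
  have hdisj : Disjoint I (I.image f) := by
    rw [disjoint_right, forall_mem_image]
    exact hI
  have hdisj' : Disjoint (I ∪ I.image f) ({x ∈ I | f (f x) ∉ I}.image (f ∘ f)) := by
    rw [disjoint_right, forall_mem_image]
    intro x hx
    obtain ⟨hxI, hffx⟩ := mem_filter.mp hx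
    simpa [hffx, hf.mem_finset_image] using hI x hxI
  have hcard := card_le_univ (I ∪ I.image f ∪ {x ∈ I | f (f x) ∉ I}.image (f ∘ f))
  rw [card_union_of_disjoint hdisj', card_union_of_disjoint hdisj, card_image_of_injective _ hf,
    card_image_of_injective _ (hf.comp hf)] at hcard
  omega

variable {s : ℕ}

theorem bijective_two_mul : Function.Bijective fun y : ZMod (2 * s + 1) => 2 * y :=
  IsUnit.isUnit_iff_mulLeft_bijective.mp ((ZMod.isUnit_iff_coprime 2 _).mpr (by simp))

theorem exists_eq_image_two_mul_arc {I : Finset (ZMod (2 * s + 1))} (hcard : #I = s)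
    (hI : ∀ x ∈ I, x + 1 ∉ I) : ∃ b, I = (arc b s).image (2 * ·) := by
  have hinj := (bijective_two_mul (s := s)).injective
  set J := I.preimage (2 * ·) hinj.injOn with hJ_def
  have hJ : J.image (2 * ·) = I := by
    rw [image_preimage]
    exact filter_true_of_mem fun x _ => bijective_two_mul.surjective x
  have hJ_card : #J = s := by
    rw [← card_image_of_injective J hinj, hJ, hcard]
  have hends : #{y ∈ J | y + 1 ∉ J} ≤ #{x ∈ I | x + 1 + 1 ∉ I} := by
    refine card_le_card_of_injOn (2 * ·) (fun y hy => ?_) hinj.injOn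
    simpa [hJ_def, mul_add, add_assoc, one_add_one_eq_two] using hy
  have hgap := card_filter_notMem_add_two_mul_card_le (add_left_injective 1) hI
  rw [ZMod.card] at hgap
  obtain ⟨b, hb⟩ := exists_eq_arc_of_card_le_one (J := J) (by omega)
  exact ⟨b, by rw [← hJ, hb, hJ_card]⟩

theorem two_mul_add_one_ne_two_mul {c y z : ZMod (2 * s + 1)} (hy : y ∈ arc c s)
    (hz : z ∈ arc c s) : 2 * y + 1 ≠ 2 * z := by
  obtain ⟨k, hk, rfl⟩ := mem_arc_iff_exists.mp hy
  obtain ⟨l, hl, rfl⟩ := mem_arc_iff_exists.mp hz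
  intro h
  have hcast : ((2 * k + 1 : ℕ) : ZMod (2 * s + 1)) = (2 * l : ℕ) := by
    push_cast
    linear_combination h
  have := CharP.natCast_injOn_Iio (ZMod (2 * s + 1)) (2 * s + 1)
    (Set.mem_Iio.mpr (by omega)) (Set.mem_Iio.mpr (by omega)) hcast
  omega

end OddCycle

end CyclicArc

open CyclicArc in
/-- In the cycle `C_{2s+1}` (vertex set `ZMod (2s+1)`, with `x` adjacent to `x+1`),
any `s` independent sets `I 0, …, I (s-1)`, each of size `s`, admit a rainbow
independent set of size `s`: there are distinct vertices `x j ∈ I j` whose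
union is independent. -/
theorem rainbow_independent_sets_in_odd_cycle
    (s : ℕ) (hs : 1 ≤ s)
    (I : Fin s → Finset (ZMod (2 * s + 1)))
    (hcard : ∀ j, (I j).card = s)
    (hindep : ∀ j, ∀ x ∈ I j, x + 1 ∉ I j) :
    ∃ x : Fin s → ZMod (2 * s + 1),
      Function.Injective x ∧
      (∀ j, x j ∈ I j) ∧
      (∀ j l : Fin s, x j + 1 ≠ x l) := by
  choose b hb using fun j => exists_eq_image_two_mul_arc (hcard j) (hindep j)
  obtain ⟨c, σ, hσ⟩ := exists_perm_add_mem_arc b (l := s) (by omega) (by omega)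
  refine ⟨fun j => 2 * (c + (σ j : ℕ)), fun j l hjl => ?_, fun j => ?_, fun j l => ?_⟩
  · have hrank : (σ j : ℕ) = σ l :=
      injOn_add_natCast c (Set.mem_Iio.mpr (by omega)) (Set.mem_Iio.mpr (by omega))
        (bijective_two_mul.injective hjl)
    exact σ.injective (Fin.ext hrank)
  · rw [hb j]
    exact mem_image_of_mem _ (hσ j)
  · exact two_mul_add_one_ne_two_mul (add_natCast_mem_arc (σ j).isLt)
      (add_natCast_mem_arc (σ l).isLt)
end

section
/- Let s ≥ 1 be an integer and, for each 1 ≤ i ≤ s, let V_i = {a_i, a_i+1, …, a_i+s−1} (taken modulo 2s+1) be a set of s consecutive vertices on the cycle C_{2s+1}, where a_i ∈ Z_{2s+1}. Then there exist vertices x₁, …, x_s with x_i ∈ V_i for each i, all distinct, such that the set {x₁, …, x_s} consists of s consecutive vertices on C_{2s+1}, i.e., {x₁, …, x_s} = {c, c+1, …, c+s−1} modulo 2s+1 for some c ∈ Z_{2s+1}. -/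
/-!
Let `s` arcs start at the vertices `a i` of a cycle of length `n > 2 s`, and consider the walk
`P k = k - #{(i, j) | j < k, a i = j mod n}`. Its steps are at most `+1` and it gains
`g = n - s` over each period `n`. By the discrete intermediate value property it visits every
class modulo `g`, and since `n < 2 g` some class is visited only once per period, say at time `m`.
Between times `m` and `m + n` the walk then avoids the values `P m` and `P m + g`, so it stays
strictly between them.

In terms of the offsets `d i = (a i - m) mod n`, this says that `#{j | d j ≤ d i} ≤ d i` and
`d i + s < n + #{j | d j < d i}`. Ranking the arcs by increasing offset, the rank `r i` therefore
satisfies `d i - (n - s - 1) ≤ r i < d i`, which means that `x i = m + (n - s - 1) + r i` is one of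
the `n - s - 1` consecutive vertices starting at `a i`; for `n = 2 s + 1` this number is `s`.
-/

open Finset

section PeriodicWalk

lemma Icc_subset_image_Icc_of_succ_le_add_one {P : ℕ → ℤ} (hstep : ∀ k, P (k + 1) ≤ P k + 1)
    {p q : ℕ} (hpq : p ≤ q) : Set.Icc (P p) (P q) ⊆ P '' Set.Icc p q := by
  induction q, hpq using Nat.le_induction with
  | base => exact fun v hv => ⟨p, ⟨le_rfl, le_rfl⟩, le_antisymm hv.1 hv.2⟩
  | succ q hpq ih =>
    rintro v ⟨hpv, hvq⟩
    rcases hvq.lt_or_eq with hlt | rfl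
    · have hv : v ≤ P q := by linarith [hstep q, Int.add_one_le_of_lt hlt]
      exact Set.image_mono (Set.Icc_subset_Icc_right q.le_succ) (ih ⟨hpv, hv⟩)
    · exact ⟨q + 1, ⟨by omega, le_rfl⟩, rfl⟩

variable {P : ℕ → ℤ} {n : ℕ} {g : ℤ}

lemma exists_emod_eq_of_periodic_gain (hstep : ∀ k, P (k + 1) ≤ P k + 1)
    (hper : ∀ k, P (k + n) = P k + g) {y : ℤ} (hy : y ∈ Ico 0 g) :
    ∃ k, P k % g = y := by
  obtain ⟨hy0, hyg⟩ := mem_Ico.mp hy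
  have hg : 0 < g := hy0.trans_lt hyg
  have hv : P 0 + (y - P 0) % g ∈ Set.Icc (P 0) (P n) := by
    have hlow := Int.emod_nonneg (y - P 0) hg.ne'
    have hhigh := Int.emod_lt_of_pos (y - P 0) hg
    have hPn := hper 0
    rw [zero_add] at hPn
    constructor <;> omega
  obtain ⟨k, -, hk⟩ := Icc_subset_image_Icc_of_succ_le_add_one hstep n.zero_le hv
  refine ⟨k, ?_⟩
  rw [hk, Int.add_emod_emod, add_sub_cancel, Int.emod_eq_of_lt hy0 hyg]

lemma exists_forall_not_modEq_of_lt_two_mul_gain (hstep : ∀ k, P (k + 1) ≤ P k + 1)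
    (hper : ∀ k, P (k + n) = P k + g) (hn : n < 2 * g) :
    ∃ m, ∀ k, 0 < k → k < n → ¬ P (m + k) ≡ P m [ZMOD g] := by
  have hperiodic : Function.Periodic (fun k => P k % g) n := fun k => by simp [hper]
  obtain ⟨y, hy, hcard⟩ := exists_card_fiber_lt_of_card_lt_mul (s := range n) (t := Ico 0 g)
    (f := fun k => P k % g) (n := 2) (by simp only [card_range, Int.card_Ico]; omega)
  obtain ⟨m, hm⟩ := exists_emod_eq_of_periodic_gain hstep hper hy
  refine ⟨m, fun k hk hkn hmod => ?_⟩
  have hmem : ∀ j, P j % g = y → j % n ∈ {x ∈ range n | P x % g = y} := fun j hj =>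
    mem_filter.mpr ⟨mem_range.mpr (Nat.mod_lt j (by omega)), (hperiodic.map_mod_nat j).trans hj⟩
  have hsame : m + k ≡ m [MOD n] :=
    card_le_one.mp (Nat.le_of_lt_succ hcard) _ (hmem _ (hmod.eq.trans hm)) _ (hmem _ hm)
  exact Nat.not_dvd_of_pos_of_lt hk hkn (Nat.add_modEq_left_iff.mp hsame)

lemma lt_and_lt_add_gain_of_forall_not_modEq (hstep : ∀ k, P (k + 1) ≤ P k + 1)
    (hper : ∀ k, P (k + n) = P k + g) (hg : 0 < g) {m : ℕ}
    (hm : ∀ k, 0 < k → k < n → ¬ P (m + k) ≡ P m [ZMOD g]) {k : ℕ} (hk : 0 < k) (hkn : k < n) :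
    P m < P (m + k) ∧ P (m + k) < P m + g := by
  have havoid : ∀ c, m < c → c < m + n → ¬ P c ≡ P m [ZMOD g] := by
    intro c hmc hcn
    obtain ⟨j, rfl⟩ := Nat.exists_eq_add_of_lt hmc
    exact hm (j + 1) (by omega) (by omega)
  have hend := hper m
  constructor
  · by_contra! hle
    obtain ⟨c, ⟨hkc, hcn⟩, hc⟩ := Icc_subset_image_Icc_of_succ_le_add_one hstep
      (show m + k ≤ m + n by omega) (show P m ∈ _ from ⟨hle, by omega⟩)
    have hne : c ≠ m + n := by
      rintro rfl
      omega
    exact havoid c (by omega) (by omega) (hc ▸ Int.ModEq.refl _)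
  · by_contra! hle
    obtain ⟨c, ⟨hmc, hck⟩, hc⟩ := Icc_subset_image_Icc_of_succ_le_add_one hstep
      (show m ≤ m + k by omega) (show P m + g ∈ _ from ⟨by omega, hle⟩)
    have hne : c ≠ m := by
      rintro rfl
      omega
    exact havoid c (by omega) (by omega) (hc ▸ Int.add_modEq_right)

end PeriodicWalk

lemma exists_equiv_fin_between_card_lt_card_le {ι α : Type*} [Fintype ι] [LinearOrder α]
    (d : ι → α) :
    ∃ e : ι ≃ Fin (Fintype.card ι), ∀ i, #{j | d j < d i} ≤ e i ∧ e i < #{j | d j ≤ d i} := by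
  let f := d ∘ (Fintype.equivFin ι).symm
  let τ := (Tuple.sort f).trans (Fintype.equivFin ι).symm
  have hmono : Monotone (d ∘ τ) := Tuple.monotone_sort f
  refine ⟨τ.symm, τ.surjective.forall.mpr fun q => ?_⟩
  have hlt : #{j | d j < d (τ q)} = #{p | (d ∘ τ) p < d (τ q)} :=
    (card_equiv τ (by simp)).symm
  have hle : #{j | d j ≤ d (τ q)} = #{p | (d ∘ τ) p ≤ d (τ q)} :=
    (card_equiv τ (by simp)).symm
  rw [hlt, hle, τ.symm_apply_apply, ← not_lt, Tuple.lt_card_lt_iff_apply_lt_of_monotone hmono,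
    Tuple.lt_card_le_iff_apply_le_of_monotone hmono]
  exact ⟨lt_irrefl _, le_rfl⟩

section StartCount

variable {ι : Type*} [Fintype ι] {n : ℕ}

/-- The number of indices `i` whose starting vertex `a i` is one of the `k` consecutive vertices
`m, m + 1, …, m + k - 1` of the cycle `ZMod n` (for `k ≤ n`). -/
def startCount (a : ι → ZMod n) (m : ZMod n) (k : ℕ) : ℕ := #{i | (a i - m).val < k}

/-- The walk on the integers that goes up by one at every vertex of the cycle `ZMod n`, met in
the order `0, 1, 2, …`, and down by one for every starting vertex `a i` it meets. -/
def surplusWalk (a : ι → ZMod n) (k : ℕ) : ℤ := k - ∑ j ∈ range k, (#{i | a i = j} : ℤ)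

variable [NeZero n]

lemma startCount_period (a : ι → ZMod n) (m : ZMod n) :
    startCount a m n = Fintype.card ι := by
  simp [startCount, ZMod.val_lt]

lemma sum_card_eq_startCount (a : ι → ZMod n) (m : ZMod n) {k : ℕ} (hk : k ≤ n) :
    ∑ j ∈ range k, #{i | a i = m + j} = startCount a m k := by
  have hval : ∀ j ∈ range k, ∀ i, a i = m + j ↔ (a i - m).val = j := by
    intro j hj i
    rw [← sub_eq_iff_eq_add']
    constructor
    · intro h
      rw [h, ZMod.val_natCast_of_lt ((mem_range.mp hj).trans_le hk)]
    · rintro rfl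
      exact (ZMod.natCast_zmod_val _).symm
  calc ∑ j ∈ range k, #{i | a i = m + j}
      = ∑ j ∈ range k, #{i | (a i - m).val = j} :=
        sum_congr rfl fun j hj => by simp only [hval j hj]
    _ = #{i | (a i - m).val ∈ range k} := sum_card_fiberwise_eq_card_filter _ _ _
    _ = startCount a m k := by simp only [mem_range, startCount]

lemma surplusWalk_add (a : ι → ZMod n) (m : ℕ) {k : ℕ} (hk : k ≤ n) :
    surplusWalk a (m + k) = surplusWalk a m + k - startCount a m k := by
  simp only [surplusWalk, sum_range_add, ← sum_card_eq_startCount a m hk, Nat.cast_add,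
    Nat.cast_sum]
  ring

lemma surplusWalk_succ_le (a : ι → ZMod n) (k : ℕ) :
    surplusWalk a (k + 1) ≤ surplusWalk a k + 1 := by
  rw [surplusWalk_add a k NeZero.one_le, Nat.cast_one]
  exact sub_le_self _ (Nat.cast_nonneg _)

lemma surplusWalk_add_period (a : ι → ZMod n) (k : ℕ) :
    surplusWalk a (k + n) = surplusWalk a k + (n - Fintype.card ι) := by
  rw [surplusWalk_add a k le_rfl, startCount_period, add_sub_assoc]

end StartCount

lemma exists_startCount_bounds {ι : Type*} [Fintype ι] {n : ℕ} (a : ι → ZMod n)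
    (hn : 2 * Fintype.card ι < n) :
    ∃ m, ∀ k < n, startCount a m (k + 1) ≤ k ∧ k + Fintype.card ι < n + startCount a m k := by
  have : NeZero n := ⟨by omega⟩
  have hstep := surplusWalk_succ_le a
  have hper := surplusWalk_add_period a
  obtain ⟨m, hm⟩ := exists_forall_not_modEq_of_lt_two_mul_gain hstep hper (by omega)
  have hbetween : ∀ k, 0 < k → k < n →
      startCount a m k < k ∧ k + Fintype.card ι < n + startCount a m k := by
    intro k hk hkn
    have hwalk := lt_and_lt_add_gain_of_forall_not_modEq hstep hper (by omega) hm hk hkn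
    rw [surplusWalk_add a m hkn.le] at hwalk
    omega
  refine ⟨m, fun k hk => ⟨?_, ?_⟩⟩
  · rcases (Nat.succ_le_of_lt hk).lt_or_eq with hlt | heq
    · exact Nat.le_of_lt_succ (hbetween (k + 1) k.succ_pos hlt).1
    · rw [← Nat.succ_eq_add_one, heq, startCount_period]
      omega
  · rcases k.eq_zero_or_pos with rfl | hpos
    · omega
    · exact (hbetween k hpos hk).2

section CyclicArc

variable {n : ℕ}

/-- The set `{a, a + 1, …, a + ℓ - 1}` of `ℓ` consecutive vertices on the cycle `ZMod n`; it wraps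
around when `ℓ` exceeds `n`. -/
def cyclicArc (a : ZMod n) (ℓ : ℕ) : Finset (ZMod n) :=
  univ.image fun t : Fin ℓ => a + ((t : ℕ) : ZMod n)

lemma add_natCast_mem_cyclicArc [NeZero n] {a m : ZMod n} {p ℓ : ℕ} (hle : (a - m).val ≤ p)
    (hlt : p < (a - m).val + ℓ) : m + p ∈ cyclicArc a ℓ := by
  refine mem_image.mpr ⟨⟨p - (a - m).val, by omega⟩, mem_univ _, ?_⟩
  rw [Nat.cast_sub hle, ZMod.natCast_zmod_val]
  ring

lemma image_add_equiv_fin_eq_cyclicArc {ι : Type*} [Fintype ι] {s : ℕ} (e : ι ≃ Fin s)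
    (c : ZMod n) : (univ.image fun i => c + ((e i : ℕ) : ZMod n)) = cyclicArc c s := by
  rw [cyclicArc, ← image_univ_equiv e, image_image]
  rfl

lemma add_natCast_fin_injective {s : ℕ} (hs : s ≤ n) (c : ZMod n) :
    Function.Injective fun t : Fin s => c + ((t : ℕ) : ZMod n) := fun t u htu =>
  Fin.ext <| CharP.natCast_injOn_Iio (ZMod n) n (t.2.trans_le hs) (u.2.trans_le hs)
    (add_left_cancel htu)

end CyclicArc

theorem rainbow_consecutive_sets_in_odd_cycle_general {ι : Type*} [Fintype ι] {n ℓ : ℕ}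
    (a : ι → ZMod n) (hn : 2 * Fintype.card ι < n) (hℓ : n ≤ Fintype.card ι + ℓ + 1) :
    ∃ x : ι → ZMod n, Function.Injective x ∧ (∀ i, x i ∈ cyclicArc (a i) ℓ) ∧
      ∃ c, univ.image x = cyclicArc c (Fintype.card ι) := by
  have : NeZero n := ⟨by omega⟩
  obtain ⟨m, hm⟩ := exists_startCount_bounds a hn
  obtain ⟨e, he⟩ := exists_equiv_fin_between_card_lt_card_le fun i => (a i - m).val
  let shift := n - Fintype.card ι - 1
  refine ⟨fun i => m + shift + (e i : ℕ), ?_, fun i => ?_, m + shift,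
    image_add_equiv_fin_eq_cyclicArc e _⟩
  · exact (add_natCast_fin_injective (by omega) _).comp e.injective
  · have hrank_lt : (e i : ℕ) < (a i - m).val :=
      (he i).2.trans_le <| by simpa [startCount] using (hm _ (ZMod.val_lt (a i - m))).1
    have hle_rank : (a i - m).val + Fintype.card ι < n + e i :=
      (hm _ (ZMod.val_lt _)).2.trans_le (Nat.add_le_add_left (he i).1 n)
    simp only [add_assoc, ← Nat.cast_add]
    exact add_natCast_mem_cyclicArc (by omega) (by omega)

/-- If `V i = {a i, a i + 1, …, a i + s - 1}` (mod `2s+1`) are `s` sets of `s`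
consecutive vertices on the cycle `C_{2s+1}`, then one can pick distinct
vertices `x i ∈ V i` whose union is itself a set of `s` consecutive vertices
`{c, c+1, …, c+s-1}` on `C_{2s+1}`. -/
theorem rainbow_consecutive_sets_in_odd_cycle
    (s : ℕ) (hs : 1 ≤ s)
    (a : Fin s → ZMod (2 * s + 1)) :
    ∃ x : Fin s → ZMod (2 * s + 1),
      Function.Injective x ∧
      (∀ i, x i ∈ Finset.image (fun t : Fin s => a i + ((t : ℕ) : ZMod (2 * s + 1)))
        Finset.univ) ∧
      ∃ c : ZMod (2 * s + 1),
        Finset.image x Finset.univ =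
          Finset.image (fun t : Fin s => c + ((t : ℕ) : ZMod (2 * s + 1))) Finset.univ := by
  have h := rainbow_consecutive_sets_in_odd_cycle_general a (ℓ := s)
  simp only [Fintype.card_fin] at h
  exact h (by omega) (by omega)
end

section
/- Let s ≥ 1 be an integer and define f : Z_{2s+1} → Z_{2s+1} by f(j) = 2j − 1 (mod 2s+1). Then f is a bijection, and for every independent set I of size s in the cycle C_{2s+1}, the preimage f^{-1}(I) is a set of s consecutive vertices on C_{2s+1}, i.e., f^{-1}(I) = {a, a+1, …, a+s−1} modulo 2s+1 for some a ∈ Z_{2s+1}. -/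
/-!
The translate `I + 1` is disjoint from `I`, so the complement of `I`, which has `s + 1` vertices,
contains exactly one vertex `c` outside `I + 1`. Every vertex other than `c` therefore lies in `I`
or follows a vertex of `I`, and walking around the cycle from `c` forces `c + 1`, `c + 3`, …,
`c + 2s - 1` into `I`. These are `s` distinct vertices, hence all of `I`; since `2` is invertible
modulo `2s + 1`, they are the values `2j - 1` at `j = a, …, a + s - 1`, where `2a - 1 = c + 1`.
-/

open Finset Function

lemma iterate_odd_mem {α : Type*} {f : α → α} {I : Set α} {c : α} (hI : ∀ x ∈ I, f x ∉ I)
    (hc : c ∉ I) (hcover : ∀ x ∉ I, f x ≠ c → f x ∈ I) :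
    ∀ t : ℕ, (∀ k ≤ t, f^[2 * k + 1] c ≠ c) → f^[2 * t + 1] c ∈ I
  | 0, hne => hcover c hc (hne 0 le_rfl)
  | t + 1, hne => by
    have ih : f^[2 * t + 1] c ∈ I := iterate_odd_mem hI hc hcover t fun k hk => hne k (by lia)
    have hstep : f^[2 * (t + 1) + 1] c = f (f (f^[2 * t + 1] c)) := by
      simp only [Nat.mul_succ, iterate_succ_apply']
    rw [hstep]
    exact hcover _ (hI _ ih) (hstep ▸ hne (t + 1) le_rfl)

lemma exists_notMem_forall_apply_mem {α : Type*} [Fintype α] {f : α → α} {I : Finset α}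
    (hf : Injective f) (hcard : Fintype.card α = 2 * #I + 1) (hI : ∀ x ∈ I, f x ∉ I) :
    ∃ c ∉ I, ∀ x ∉ I, f x ≠ c → f x ∈ I := by
  classical
  have hcompl : #Iᶜ = #I + 1 := by
    rw [card_compl]
    lia
  obtain ⟨c, ⟨hc, -⟩, huniq⟩ := existsUnique_notMem_image_of_injOn_of_card_eq_add_one
    hf.injOn (fun x hx => mem_coe.mpr (mem_compl.mpr (hI x hx))) hcompl
  refine ⟨c, mem_compl.mp hc, fun x hx hne => ?_⟩
  by_contra hfx
  exact hne (huniq _ ⟨mem_compl.mpr hfx, mt hf.mem_finset_image.mp hx⟩)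

section Perm

variable {α : Type*} [Fintype α] {σ : Equiv.Perm α}

lemma iterate_eq_iterate_iff_modEq_card (hσ : σ.IsCycleOn Set.univ) (c : α) {k m : ℕ} :
    σ^[k] c = σ^[m] c ↔ k ≡ m [MOD Fintype.card α] := by
  rw [← coe_univ] at hσ
  rw [Equiv.Perm.iterate_eq_pow, Equiv.Perm.iterate_eq_pow, ← card_univ]
  exact hσ.pow_apply_eq_pow_apply (mem_univ c)

lemma exists_eq_image_odd_iterates [DecidableEq α] {I : Finset α} {n : ℕ}
    (hσ : σ.IsCycleOn Set.univ) (hcard : Fintype.card α = 2 * n + 1) (hIcard : #I = n)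
    (hI : ∀ x ∈ I, σ x ∉ I) :
    ∃ c, I = univ.image fun t : Fin n => σ^[2 * (t : ℕ) + 1] c := by
  obtain ⟨c, hc, hcover⟩ := exists_notMem_forall_apply_mem σ.injective (hIcard ▸ hcard) hI
  have iterate_inj {k m : ℕ} (hk : k < 2 * n + 1) (hm : m < 2 * n + 1)
      (h : σ^[k] c = σ^[m] c) : k = m :=
    ((iterate_eq_iterate_iff_modEq_card hσ c).mp h).eq_of_lt_of_lt (hcard ▸ hk) (hcard ▸ hm)
  have hinj : Injective fun t : Fin n => σ^[2 * (t : ℕ) + 1] c := fun t u h => by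
    have := iterate_inj (by lia) (by lia) h
    lia
  have hsub : (univ.image fun t : Fin n => σ^[2 * (t : ℕ) + 1] c) ⊆ I := by
    refine image_subset_iff.mpr fun t _ => iterate_odd_mem hI hc hcover t fun k hk h => ?_
    have := iterate_inj (m := 0) (by lia) (by lia) h
    lia
  refine ⟨c, (eq_of_subset_of_card_le hsub ?_).symm⟩
  rw [card_image_of_injective _ hinj, card_fin, hIcard]

end Perm

lemma isCycleOn_addRight_one_zmod (n : ℕ) :
    (Equiv.addRight (1 : ZMod n)).IsCycleOn Set.univ := by
  refine ⟨Set.bijOn_univ.mpr (Equiv.bijective _), fun x _ y _ => ?_⟩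
  obtain ⟨k, hk⟩ := ZMod.intCast_surjective (y - x)
  exact ⟨k, by simp [hk]⟩

lemma exists_eq_image_add_odd {s : ℕ} {I : Finset (ZMod (2 * s + 1))} (hcard : #I = s)
    (hI : ∀ x ∈ I, x + 1 ∉ I) :
    ∃ c, I = univ.image fun t : Fin s => c + ((2 * (t : ℕ) + 1 : ℕ) : ZMod (2 * s + 1)) := by
  simpa only [Equiv.coe_addRight, add_right_iterate, nsmul_one] using
    exists_eq_image_odd_iterates (isCycleOn_addRight_one_zmod _) (ZMod.card _) hcard hI

lemma isUnit_two_zmod_of_odd {n : ℕ} (hn : Odd n) : IsUnit (2 : ZMod n) := by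
  exact_mod_cast (ZMod.isUnit_iff_coprime 2 n).mpr (Nat.coprime_two_left.mpr hn)

lemma bijective_mul_sub {R : Type*} [Ring R] {a : R} (ha : IsUnit a) (b : R) :
    Bijective fun x => a * x - b :=
  (Equiv.subRight b).bijective.comp (IsUnit.isUnit_iff_mulLeft_bijective.mp ha)

/-- The map `f j = 2j - 1` on `ZMod (2s+1)` is a bijection, and for every
independent set `I` of size `s` in the cycle `C_{2s+1}` (vertex set
`ZMod (2s+1)`, with `x` adjacent to `x+1`), the preimage `f ⁻¹ I` is a set of
`s` consecutive vertices `{a, a+1, …, a+s-1}` on `C_{2s+1}`. -/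
theorem preimage_of_independent_set_is_consecutive
    (s : ℕ) (hs : 1 ≤ s) :
    Function.Bijective (fun j : ZMod (2 * s + 1) => 2 * j - 1) ∧
    ∀ I : Finset (ZMod (2 * s + 1)), I.card = s → (∀ x ∈ I, x + 1 ∉ I) →
      ∃ a : ZMod (2 * s + 1),
        (fun j : ZMod (2 * s + 1) => 2 * j - 1) ⁻¹' (I : Set (ZMod (2 * s + 1))) =
          ↑(Finset.image (fun t : Fin s => a + ((t : ℕ) : ZMod (2 * s + 1))) Finset.univ) := by
  have hbij := bijective_mul_sub (isUnit_two_zmod_of_odd (odd_two_mul_add_one s)) 1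
  refine ⟨hbij, fun I hcard hI => ?_⟩
  obtain ⟨c, hc⟩ := exists_eq_image_add_odd hcard hI
  obtain ⟨a, ha : 2 * a - 1 = c + 1⟩ := hbij.surjective (c + 1)
  refine ⟨a, ?_⟩
  have hblock : I = (univ.image fun t : Fin s => a + ((t : ℕ) : ZMod (2 * s + 1))).image
      fun j => 2 * j - 1 := by
    rw [hc, image_image]
    refine image_congr fun t _ => ?_
    simp only [comp_apply]
    push_cast
    linear_combination -ha
  rw [hblock, coe_image, Set.preimage_image_eq _ hbij.injective]
end

section
/- Let s ≥ 1 be an integer, let a₁ ≤ a₂ ≤ … ≤ a_s be integers, and let k be an integer such that k ≢ a_j − 1 − j (mod 2s+1) for all 1 ≤ j ≤ s. If k > a_i − 1 − i for some index 1 ≤ i ≤ s, then k > a_j − 1 − j for all 1 ≤ j ≤ i. -/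
/-! The sequence `b j = a j - 1 - j` decreases by at most one at each step. A sequence of integers
with this property cannot pass from `k` or above to below `k` without taking the value `k`,
and the congruence hypothesis says in particular that `k` is never a value of `b`. -/

theorem lt_of_le_of_forall_covBy_le_succ {ι α : Type*} [PartialOrder ι] [PredOrder ι]
    [IsPredArchimedean ι] [PartialOrder α] [SuccOrder α] {b : ι → α} {k : α} {i j : ι}
    (hstep : ∀ ⦃m n⦄, m ⋖ n → b m ≤ Order.succ (b n)) (hne : ∀ m ≤ i, b m ≠ k)
    (hi : b i < k) (hji : j ≤ i) : b j < k := by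
  induction hji using Pred.rec with
  | rfl => exact hi
  | pred n hni hn =>
    obtain hcov | heq := (Order.pred_wcovBy n).covBy_or_eq
    · have hle : b (Order.pred n) ≤ k := (hstep hcov).trans (Order.succ_le_of_lt hn)
      exact hle.lt_of_ne (hne _ (hcov.le.trans hni))
    · rwa [heq]

theorem claim1_part1_general {s : ℕ} {a : Fin s → ℤ} (hmono : Monotone a) {k : ℤ} {i j : Fin s}
    (hne : ∀ m ≤ i, a m - 1 - ((m : ℕ) + 1) ≠ k)
    (hi : a i - 1 - ((i : ℕ) + 1) < k) (hji : j ≤ i) : a j - 1 - ((j : ℕ) + 1) < k := by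
  refine lt_of_le_of_forall_covBy_le_succ (b := fun j : Fin s ↦ a j - 1 - ((j : ℕ) + 1))
    (fun m n hmn ↦ ?_) hne hi hji
  have hle : a m ≤ a n := hmono hmn.le
  have hval : (m : ℕ) + 1 = n := Order.covBy_iff_add_one_eq.mp (Fin.covBy_iff.mp hmn)
  rw [Order.succ_eq_add_one]
  omega

/-- Claim 1(1): with `a₁ ≤ … ≤ a_s` integers and `k` incongruent to every
`a_j - 1 - j` mod `2s+1`, if `k > a_i - 1 - i` then `k > a_j - 1 - j` for all
`j ≤ i` (index `i : Fin s` represents `i+1`). -/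
theorem claim1_part1
    (s : ℕ) (hs : 1 ≤ s) (a : Fin s → ℤ) (hmono : Monotone a) (k : ℤ)
    (hcong : ∀ j : Fin s, ¬ (k ≡ a j - 1 - ((j : ℕ) + 1) [ZMOD (2 * s + 1)]))
    (i : Fin s) (hi : a i - 1 - ((i : ℕ) + 1) < k) :
    ∀ j : Fin s, j ≤ i → a j - 1 - ((j : ℕ) + 1) < k := by
  have hne (j : Fin s) : a j - 1 - ((j : ℕ) + 1) ≠ k := fun h ↦ hcong j (h ▸ Int.ModEq.refl _)
  exact fun j hji ↦ claim1_part1_general hmono (fun j _ ↦ hne j) hi hji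
end

section
/- Let s ≥ 1 be an integer, let a₁ ≤ a₂ ≤ … ≤ a_s be integers, and let k be an integer such that k ≢ a_j + s − j (mod 2s+1) for all 1 ≤ j ≤ s. If k > a_i + s − i for some index 1 ≤ i ≤ s, then k > a_j + s − j for all 1 ≤ j ≤ i. -/
/-!
Put `b j = a j + s - (j + 1)`. Since `a` is monotone, `b` drops by at most one at each step, so `b`
cannot pass from above `k` to below `k` without taking the value `k`, which is excluded
because equal integers are congruent.
-/

theorem isLowerSet_setOf_lt_of_notMem_range {α β : Type*} [Preorder α] [SuccOrder α]
    [IsSuccArchimedean α] [PartialOrder β] [SuccOrder β] {f : α → β} {k : β}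
    (hstep : ∀ x, f x ≤ Order.succ (f (Order.succ x))) (hk : k ∉ Set.range f) :
    IsLowerSet {x | f x < k} := by
  intro i j hji hi
  induction hji using Succ.rec with
  | rfl => exact hi
  | succ x _ ih =>
    have hle : f x ≤ k := (hstep x).trans (Order.succ_le_of_lt hi)
    exact ih (hle.lt_of_ne fun h => hk ⟨x, h⟩)

theorem val_orderSucc_le_add_one {n : ℕ} (x : Fin n) : (Order.succ x).val ≤ x.val + 1 := by
  cases n with
  | zero => exact x.elim0
  | succ n => cases x using Fin.lastCases <;> simp

theorem claim1_part2_general {s : ℕ} {a : Fin s → ℤ} (hmono : Monotone a) {k : ℤ}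
    (hne : ∀ j : Fin s, k ≠ a j + s - ((j : ℕ) + 1)) :
    IsLowerSet {j : Fin s | a j + s - ((j : ℕ) + 1) < k} := by
  refine isLowerSet_setOf_lt_of_notMem_range (fun j => ?_) (fun ⟨j, hj⟩ => hne j hj.symm)
  have hval := val_orderSucc_le_add_one j
  have ha : a j ≤ a (Order.succ j) := hmono (Order.le_succ j)
  rw [Order.succ_eq_add_one]
  omega

/-- Claim 1(2): with `a₁ ≤ … ≤ a_s` integers and `k` incongruent to every
`a_j + s - j` mod `2s+1`, if `k > a_i + s - i` then `k > a_j + s - j` for all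
`j ≤ i` (index `i : Fin s` represents `i+1`). -/
theorem claim1_part2
    (s : ℕ) (hs : 1 ≤ s) (a : Fin s → ℤ) (hmono : Monotone a) (k : ℤ)
    (hcong : ∀ j : Fin s, ¬ (k ≡ a j + s - ((j : ℕ) + 1) [ZMOD (2 * s + 1)]))
    (i : Fin s) (hi : a i + s - ((i : ℕ) + 1) < k) :
    ∀ j : Fin s, j ≤ i → a j + s - ((j : ℕ) + 1) < k :=
  fun _ hj => claim1_part2_general hmono (fun l h => hcong l (h ▸ Int.ModEq.refl _)) hj hi
end

section
/- Let s ≥ 1 be an integer, let a₁ ≤ a₂ ≤ … ≤ a_s be integers, and let k be an integer such that k ≢ a_j − 1 − j (mod 2s+1) for all 1 ≤ j ≤ s. If k < a_i − 1 − i for some index 1 ≤ i ≤ s, then k < a_j − 1 − j for all i ≤ j ≤ s. -/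
/-!
Put `b_j = a_j - 1 - j`. Since `a` is nondecreasing, `b` drops by at most one from each index to the
next, so it cannot pass from above `k` to below `k` without taking the value `k`, which the
incongruence excludes.
-/

theorem lt_apply_of_le_succ_apply_succ_of_ne {ι α : Type*}
    [PartialOrder ι] [SuccOrder ι] [IsSuccArchimedean ι] [LinearOrder α] [SuccOrder α]
    {f : ι → α} {k : α} {i j : ι}
    (hdrop : ∀ m, i ≤ m → f m ≤ Order.succ (f (Order.succ m)))
    (hne : ∀ m, i ≤ m → k ≠ f m) (hi : k < f i) (hij : i ≤ j) : k < f j := by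
  induction hij using Succ.rec with
  | rfl => exact hi
  | succ m him ih =>
    have hle : k ≤ f (Order.succ m) := Order.le_of_lt_succ (ih.trans_le (hdrop m him))
    exact hle.lt_of_ne (hne _ (him.trans (Order.le_succ m)))

theorem fin_val_orderSucc_le_add_one {n : ℕ} (i : Fin n) : (Order.succ i).val ≤ i + 1 := by
  cases n with
  | zero => exact i.elim0
  | succ n =>
    cases i using Fin.lastCases with
    | last => simp
    | cast i => simp

theorem claim1_part3_general {s : ℕ} {a : Fin s → ℤ} (hmono : Monotone a) {k : ℤ} {i : Fin s}
    (hne : ∀ j, i ≤ j → k ≠ a j - 1 - ((j : ℕ) + 1)) (hi : k < a i - 1 - ((i : ℕ) + 1))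
    {j : Fin s} (hij : i ≤ j) : k < a j - 1 - ((j : ℕ) + 1) := by
  refine lt_apply_of_le_succ_apply_succ_of_ne
    (f := fun m : Fin s ↦ a m - 1 - ((m : ℕ) + 1)) (fun m _ ↦ ?_) hne hi hij
  have ha : a m ≤ a (Order.succ m) := hmono (Order.le_succ m)
  have hval : (Order.succ m).val ≤ m + 1 := fin_val_orderSucc_le_add_one m
  rw [Order.succ_eq_add_one (_ : ℤ)]
  lia

/-- Claim 1(3): with `a₁ ≤ … ≤ a_s` integers and `k` incongruent to every
`a_j - 1 - j` mod `2s+1`, if `k < a_i - 1 - i` then `k < a_j - 1 - j` for all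
`j ≥ i` (index `i : Fin s` represents `i+1`). -/
theorem claim1_part3
    (s : ℕ) (hs : 1 ≤ s) (a : Fin s → ℤ) (hmono : Monotone a) (k : ℤ)
    (hcong : ∀ j : Fin s, ¬ (k ≡ a j - 1 - ((j : ℕ) + 1) [ZMOD (2 * s + 1)]))
    (i : Fin s) (hi : k < a i - 1 - ((i : ℕ) + 1)) :
    ∀ j : Fin s, i ≤ j → k < a j - 1 - ((j : ℕ) + 1) :=
  fun _ ↦ claim1_part3_general hmono (fun m _ h ↦ hcong m (h ▸ Int.ModEq.refl k)) hi
end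

section
/- Let s ≥ 1 be an integer, let a₁, …, a_s be integers with 1 = a₁ ≤ a₂ ≤ … ≤ a_s ≤ 2s+1, and let k be an integer with 0 ≤ k ≤ 2s such that for all 1 ≤ i ≤ s, k ≢ a_i − 1 − i (mod 2s+1) and k ≢ a_i + s − i (mod 2s+1). Suppose k > a₁ + s − 1. Then the set R = {i : 1 ≤ i ≤ s and k > a_i + s − i} is nonempty; let r = max R. Moreover: (i) for every r+1 ≤ i ≤ s, a_i − 1 < k + i < a_i + s; (ii) for every 1 ≤ i ≤ r, a_i − 1 + (2s+1) < k + s + i < a_i + s + (2s+1); consequently, for every i, the vertex of Z_{2s+1} represented by k+i (if i > r) or by k+s+i (if i ≤ r) lies in V_i = {a_i, a_i+1, …, a_i+s−1} (mod 2s+1), and the union {k+i : r+1 ≤ i ≤ s} ∪ {k+s+i : 1 ≤ i ≤ r} (mod 2s+1) consists of s consecutive vertices on C_{2s+1}. -/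
/-!
The numbers `b i = a i - i` drop by at most `1` at each step because `a` is monotone, so once `b`
exceeds a value that it never takes, it stays above that value. The congruence hypotheses say that
`b` never takes the values `k + 1`, `k - s` and `k - 2 * s`, the last one being `k + 1` shifted by
`2 * s + 1`:

* `b` stays below `k + 1`, since its last value is at most `s + 1`;
* `b` stays above `k - 2 * s`, since its first value is `0`;
* `b` is below `k - s` exactly at the indices up to `r`.

These comparisons are the inequalities (i) and (ii). The selected vertices are `k + r + 1, …, k + s`
followed by `k + s + 1, …, k + s + r`, that is, `s` consecutive vertices in rotated order.
-/

section DiscreteIntermediateValue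

variable {α : Type*} [Preorder α] [SuccOrder α] [IsSuccArchimedean α] {f : α → ℤ} {m : ℤ}

lemma lt_apply_of_le_of_forall_ne (hstep : ∀ x, f x ≤ f (Order.succ x) + 1)
    (hne : ∀ x, f x ≠ m) {x y : α} (hxy : x ≤ y) (hx : m ≤ f x) : m < f y := by
  induction hxy using Succ.rec with
  | rfl => exact lt_of_le_of_ne hx (hne x).symm
  | succ z _ hz =>
    have := hstep z
    have := hne (Order.succ z)
    omega

lemma apply_lt_of_le_of_forall_ne (hstep : ∀ x, f x ≤ f (Order.succ x) + 1)
    (hne : ∀ x, f x ≠ m) {x y : α} (hxy : x ≤ y) (hy : f y < m) : f x < m :=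
  not_le.1 fun hx ↦ lt_asymm hy (lt_apply_of_le_of_forall_ne hstep hne hxy hx)

lemma apply_lt_iff_le_of_isGreatest (hstep : ∀ x, f x ≤ f (Order.succ x) + 1)
    (hne : ∀ x, f x ≠ m) {r : α} (hr : IsGreatest {x | f x < m} r) (x : α) : f x < m ↔ x ≤ r :=
  ⟨fun hx ↦ hr.2 hx, fun hx ↦ apply_lt_of_le_of_forall_ne hstep hne hx hr.1⟩

end DiscreteIntermediateValue

section Offset

variable {s : ℕ} {a : Fin s → ℤ} {k : ℤ}

/-- The difference `a_i - i` of the paper, where `i : Fin s` stands for the index `i + 1`. It is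
monotone up to drops by `1`, and its comparison with translates of `k` locates `k + i` relative
to `V_i`. -/
def offset (a : Fin s → ℤ) (i : Fin s) : ℤ := a i - ((i : ℕ) + 1)

lemma offset_le_offset_succ_add_one (hmono : Monotone a) (i : Fin s) :
    offset a i ≤ offset a (Order.succ i) + 1 := by
  have hval : ((Order.succ i : Fin s) : ℕ) ≤ i + 1 := by
    by_cases hi : (i : ℕ) + 1 < s
    · exact Order.succ_le_of_lt (b := ⟨i + 1, hi⟩) (Fin.lt_def.2 (Nat.lt_succ_self _))
    · omega
  have := hmono (Order.le_succ i)
  unfold offset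
  omega

lemma offset_ne_of_not_modEq_sub_one {i : Fin s}
    (h : ¬ k ≡ a i - 1 - ((i : ℕ) + 1) [ZMOD (2 * s + 1)]) :
    offset a i ≠ k + 1 ∧ offset a i ≠ k - 2 * s := by
  unfold offset
  refine ⟨fun heq ↦ h ?_, fun heq ↦ h ?_⟩
  · rw [show a i - 1 - ((i : ℕ) + 1) = k by omega]
  · exact Int.modEq_iff_dvd.2 ⟨-1, by linarith⟩

lemma offset_ne_of_not_modEq_add {i : Fin s}
    (h : ¬ k ≡ a i + s - ((i : ℕ) + 1) [ZMOD (2 * s + 1)]) : offset a i ≠ k - s := by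
  unfold offset
  intro heq
  exact h (by rw [show a i + s - ((i : ℕ) + 1) = k by omega])

lemma add_index_bounds_of_offset_bounds {i : Fin s} (hlow : k - s < offset a i)
    (hhigh : offset a i < k + 1) :
    a i - 1 < k + ((i : ℕ) + 1) ∧ k + ((i : ℕ) + 1) < a i + s := by
  unfold offset at hlow hhigh
  omega

lemma add_add_index_bounds_of_offset_bounds {i : Fin s} (hlow : k - 2 * s ≤ offset a i)
    (hhigh : offset a i < k - s) :
    a i - 1 + (2 * s + 1) < k + s + ((i : ℕ) + 1) ∧
      k + s + ((i : ℕ) + 1) < a i + s + (2 * s + 1) := by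
  unfold offset at hlow hhigh
  omega

end Offset

section SelectedVertex

variable {n s : ℕ}

/-- The set `{c, c + 1, …, c + l - 1}` of `l` consecutive vertices, starting at `c`, on the cycle
with vertex set `ZMod n`; thus `V_i` is `cycleArc (2 * s + 1) s (a i)`. -/
def cycleArc (n l : ℕ) (c : ZMod n) : Finset (ZMod n) :=
  Finset.image (fun t : Fin l ↦ c + ((t : ℕ) : ZMod n)) Finset.univ

lemma intCast_mem_cycleArc {l : ℕ} {x y : ℤ} (hxy : x ≤ y) (hyx : y < x + l) :
    (y : ZMod n) ∈ cycleArc n l x := by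
  obtain ⟨t, rfl⟩ := Int.le.dest hxy
  exact Finset.mem_image.2 ⟨⟨t, by omega⟩, Finset.mem_univ _, by push_cast; rfl⟩

/-- The vertex selected in `V_i`: the class of `k + s + i` for `i ≤ r` and of `k + i` for `i > r`,
where `i : Fin s` stands for the index `i + 1`. -/
def selectedVertex (n : ℕ) (k : ℤ) (r i : Fin s) : ZMod n :=
  if i ≤ r then ((k + s + ((i : ℕ) + 1) : ℤ) : ZMod n) else ((k + ((i : ℕ) + 1) : ℤ) : ZMod n)

lemma selectedVertex_mem_cycleArc {k x : ℤ} {r i : Fin s}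
    (hgt : r < i → x - 1 < k + ((i : ℕ) + 1) ∧ k + ((i : ℕ) + 1) < x + s)
    (hle : i ≤ r → x - 1 + n < k + s + ((i : ℕ) + 1) ∧ k + s + ((i : ℕ) + 1) < x + s + n) :
    selectedVertex n k r i ∈ cycleArc n s x := by
  unfold selectedVertex
  split_ifs with hi
  · obtain ⟨hlow, hhigh⟩ := hle hi
    have hmem := intCast_mem_cycleArc (n := n) (l := s) (x := x + n)
      (y := k + s + ((i : ℕ) + 1)) (by omega) (by omega)
    rwa [Int.cast_add x, Int.cast_natCast, ZMod.natCast_self, add_zero] at hmem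
  · obtain ⟨hlow, hhigh⟩ := hgt (not_le.1 hi)
    exact intCast_mem_cycleArc (by omega) (by omega)

-- Adding `r.rev = s - 1 - r` rotates `Fin s` so that the index after `r` comes first. That index is
-- `r + 2` when counted from `1`, so the first selected vertex is `k + r + 2`.
lemma selectedVertex_eq_add_val (k : ℤ) (r i : Fin s) :
    selectedVertex n k r i = ((k + r + 2 : ℤ) : ZMod n) + ((i + r.rev : Fin s) : ℕ) := by
  have hval : ((i + r.rev : Fin s) : ℤ) = if i ≤ r then (s : ℤ) - 1 - r + i else i - r - 1 := by
    rw [Fin.val_add_eq_ite, Fin.val_rev]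
    split_ifs <;> omega
  rw [← Int.cast_natCast ((i + r.rev : Fin s) : ℕ), hval, ← Int.cast_add]
  unfold selectedVertex
  split_ifs <;> congr 1 <;> ring

lemma image_selectedVertex [NeZero s] (k : ℤ) (r : Fin s) :
    Finset.image (selectedVertex n k r) Finset.univ = cycleArc n s ((k + r + 2 : ℤ) : ZMod n) := by
  have hrot : selectedVertex n k r =
      (fun t : Fin s ↦ ((k + r + 2 : ℤ) : ZMod n) + (t : ℕ)) ∘ Equiv.addRight r.rev :=
    funext fun i ↦ selectedVertex_eq_add_val k r i
  rw [hrot, ← Finset.image_image, Finset.image_univ_equiv, cycleArc]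

end SelectedVertex

/-- Case 2 of the proof of Theorem 2. Let `1 = a₁ ≤ … ≤ a_s ≤ 2s+1`, and let
`0 ≤ k ≤ 2s` be incongruent mod `2s+1` to every `a_i - 1 - i` and every
`a_i + s - i`.  Assume `k > a₁ + s - 1`.  Then the set
`R = {i : k > a_i + s - i}` is nonempty; with `r = max R`:
(i) for `i > r`, `a_i - 1 < k + i < a_i + s`;
(ii) for `i ≤ r`, `a_i - 1 + (2s+1) < k + s + i < a_i + s + (2s+1)`;
consequently each selected vertex (`k+i` for `i > r`, `k+s+i` for `i ≤ r`,
read in `ZMod (2s+1)`) lies in `V_i = {a_i, …, a_i + s - 1}`, and together the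
selected vertices form `s` consecutive vertices on `C_{2s+1}`.
(Index `i : Fin s` represents `i+1`.) -/
theorem theorem2_case2
    (s : ℕ) (hs : 1 ≤ s) (a : Fin s → ℤ) (hmono : Monotone a)
    (hfirst : a ⟨0, hs⟩ = 1) (hlast : a ⟨s - 1, by omega⟩ ≤ 2 * s + 1)
    (k : ℤ) (hk0 : 0 ≤ k) (hk2 : k ≤ 2 * s)
    (hcong : ∀ i : Fin s,
      ¬ (k ≡ a i - 1 - ((i : ℕ) + 1) [ZMOD (2 * s + 1)]) ∧
      ¬ (k ≡ a i + s - ((i : ℕ) + 1) [ZMOD (2 * s + 1)]))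
    (hcase : a ⟨0, hs⟩ + s - 1 < k) :
    ∃ hR : (Finset.filter (fun i : Fin s => a i + s - ((i : ℕ) + 1) < k)
        Finset.univ).Nonempty,
      let r := (Finset.filter (fun i : Fin s => a i + s - ((i : ℕ) + 1) < k)
        Finset.univ).max' hR
      (∀ i : Fin s, r < i →
          a i - 1 < k + ((i : ℕ) + 1) ∧ k + ((i : ℕ) + 1) < a i + s) ∧
      (∀ i : Fin s, i ≤ r →
          a i - 1 + (2 * s + 1) < k + s + ((i : ℕ) + 1) ∧
          k + s + ((i : ℕ) + 1) < a i + s + (2 * s + 1)) ∧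
      (∀ i : Fin s,
          (if i ≤ r then ((k + s + ((i : ℕ) + 1) : ℤ) : ZMod (2 * s + 1))
            else ((k + ((i : ℕ) + 1) : ℤ) : ZMod (2 * s + 1))) ∈
            Finset.image
              (fun t : Fin s => ((a i : ZMod (2 * s + 1)) + ((t : ℕ) : ZMod (2 * s + 1))))
              Finset.univ) ∧
      (∃ c : ZMod (2 * s + 1),
          Finset.image
            (fun i : Fin s =>
              if i ≤ r then ((k + s + ((i : ℕ) + 1) : ℤ) : ZMod (2 * s + 1))
              else ((k + ((i : ℕ) + 1) : ℤ) : ZMod (2 * s + 1)))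
            Finset.univ =
          Finset.image (fun t : Fin s => c + ((t : ℕ) : ZMod (2 * s + 1)))
            Finset.univ) := by
  have : NeZero s := ⟨by omega⟩
  have hstep := offset_le_offset_succ_add_one hmono
  have hne i := offset_ne_of_not_modEq_sub_one (hcong i).1
  have hne_mid i := offset_ne_of_not_modEq_add (hcong i).2
  have hbelow (i : Fin s) : offset a i < k + 1 :=
    apply_lt_of_le_of_forall_ne hstep (fun j ↦ (hne j).1) (y := ⟨s - 1, by omega⟩)
      (Nat.le_sub_one_of_lt i.2) (by simp only [offset]; omega)
  have habove (i : Fin s) : k - 2 * s < offset a i :=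
    lt_apply_of_le_of_forall_ne hstep (fun j ↦ (hne j).2) (x := ⟨0, hs⟩)
      (Nat.zero_le i) (by simp only [offset]; omega)
  refine ⟨⟨⟨0, hs⟩, by simpa using hcase⟩, ?_⟩
  intro r
  have hr : IsGreatest {i | offset a i < k - s} r := by
    have hmax : IsGreatest _ r := Finset.isGreatest_max' _ _
    simpa [offset, lt_sub_iff_add_lt, sub_add_eq_add_sub] using hmax
  have hmid := apply_lt_iff_le_of_isGreatest hstep hne_mid hr
  have hgt (i : Fin s) (hi : r < i) := add_index_bounds_of_offset_bounds
    (lt_of_le_of_ne (not_lt.1 ((hmid i).not.2 hi.not_ge)) (hne_mid i).symm) (hbelow i)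
  have hle (i : Fin s) (hi : i ≤ r) :=
    add_add_index_bounds_of_offset_bounds (habove i).le ((hmid i).2 hi)
  exact ⟨hgt, hle, fun i ↦ selectedVertex_mem_cycleArc (hgt i) (by exact_mod_cast hle i),
    _, image_selectedVertex k r⟩
end
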